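/- The backward and forward implicit action functions are inverse to each other in the sense that for all x₀, x ∈ M, u₀, u ∈ ℝ and t > 0: h_{x₀,u₀}(x,t) = u if and only if h^{x,u}(x₀,t) = u₀. (Proposition 2.4, Equivalence.) -/

import Mathlib

open Filter MeasureTheory Set
open scoped RealInnerProductSpace Topology NNReal

noncomputable section

/-- The model space: the closed manifold `M` is realized as a compact subset of a
Euclidean space (Whitney embedding), and the fibers of `T*M` as Euclidean vectors. -/
abbrev Euc (n : ℕ) := EuclideanSpace ℝ (Fin n)

variable {n : ℕ}

/-- `∂H/∂p`, the gradient of `H` in the momentum variable. -/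
def pGrad (H : Euc n → Euc n → ℝ → ℝ) (x p : Euc n) (u : ℝ) : Euc n :=
  gradient (fun q => H x q u) p

/-- `∂H/∂x`, the gradient of `H` in the position variable. -/
def xGrad (H : Euc n → Euc n → ℝ → ℝ) (x p : Euc n) (u : ℝ) : Euc n :=
  gradient (fun y => H y p u) x

/-- `∂H/∂u`, the derivative of `H` in the value variable. -/
def uDeriv (H : Euc n → Euc n → ℝ → ℝ) (x p : Euc n) (u : ℝ) : ℝ :=
  deriv (fun w => H x p w) u

/-- The contact Hamiltonian vector field
`ẋ = ∂H/∂p, ṗ = −∂H/∂x − (∂H/∂u)p, u̇ = (∂H/∂p)·p − H`. -/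
def contactVF (H : Euc n → Euc n → ℝ → ℝ) :
    Euc n × Euc n × ℝ → Euc n × Euc n × ℝ := fun z =>
  (pGrad H z.1 z.2.1 z.2.2,
   -xGrad H z.1 z.2.1 z.2.2 - uDeriv H z.1 z.2.1 z.2.2 • z.2.1,
   ⟪pGrad H z.1 z.2.1 z.2.2, z.2.1⟫ - H z.1 z.2.1 z.2.2)

/-- (H1) Positive definiteness of `∂²H/∂p²`. -/
def PosDefInP (H : Euc n → Euc n → ℝ → ℝ) : Prop :=
  ∀ x u p v, v ≠ 0 → 0 < ⟪(fderiv ℝ (fun q => pGrad H x q u) p) v, v⟫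

/-- (H2) Superlinearity of `H` in `p`. -/
def Superlinear (H : Euc n → Euc n → ℝ → ℝ) : Prop :=
  ∀ x u, Tendsto (fun p : Euc n => H x p u / ‖p‖) (cocompact (Euc n)) atTop

/-- (H3) `|∂H/∂u| ≤ λ`. -/
def LipInU (H : Euc n → Euc n → ℝ → ℝ) (lam : ℝ) : Prop :=
  ∀ x p u, |uDeriv H x p u| ≤ lam

/-- `H` is a `C³` function. -/
def C3 (H : Euc n → Euc n → ℝ → ℝ) : Prop :=
  ContDiff ℝ 3 (fun z : Euc n × Euc n × ℝ => H z.1 z.2.1 z.2.2)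

/-- `L` is the Legendre transform of `H`: `L(x,v,u) = sup_p {⟨p,v⟩ − H(x,p,u)}`. -/
def IsLegendre (H L : Euc n → Euc n → ℝ → ℝ) : Prop :=
  ∀ x v u, L x v u = sSup {r | ∃ p : Euc n, r = ⟪p, v⟫ - H x p u}

/-- `Φ` is the (complete) flow of the contact Hamiltonian vector field `X_H`. -/
def IsContactFlow (H : Euc n → Euc n → ℝ → ℝ)
    (Φ : ℝ → Euc n × Euc n × ℝ → Euc n × Euc n × ℝ) : Prop :=
  (∀ z, Φ 0 z = z) ∧ ∀ z t, HasDerivAt (fun s => Φ s z) (contactVF H (Φ t z)) t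

/-- Absolutely continuous curve on `[a,b]`: an indefinite integral of an integrable map. -/
def AbsCont (γ : ℝ → Euc n) (a b : ℝ) : Prop :=
  ∃ g : ℝ → Euc n, IntervalIntegrable g volume a b ∧
    ∀ s ∈ Icc a b, γ s = γ a + ∫ τ in a..s, g τ

/-- The superdifferential `D⁺φ(x)` of `φ` at `x` (relative to `M`):
`limsup_{y→x} (φ(y) − φ(x) − ⟨p, y−x⟩)/|y−x| ≤ 0`. -/
def SuperDiff (M : Set (Euc n)) (φ : Euc n → ℝ) (x : Euc n) : Set (Euc n) :=
  {p | ∀ ε > (0:ℝ), ∀ᶠ y in 𝓝[M \ {x}] x,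
      φ y - φ x - ⟪p, y - x⟫ ≤ ε * ‖y - x‖}

/-- `φ` is a viscosity subsolution of `H(x,∂ₓu,u) = c` on `U`:
`H(x,p,φ(x)) ≤ c` for every `x ∈ U` and `p ∈ D⁺φ(x)`. -/
def IsVSub (M : Set (Euc n)) (H : Euc n → Euc n → ℝ → ℝ) (c : ℝ)
    (φ : Euc n → ℝ) (U : Set (Euc n)) : Prop :=
  ∀ x ∈ U, ∀ p ∈ SuperDiff M φ x, H x p (φ x) ≤ c

/-- `φ` is a strict viscosity subsolution of `H(x,∂ₓu,u) = 0` on `M`: a viscosity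
subsolution which is strict at every point of `M`. -/
def IsStrictVSub (M : Set (Euc n)) (H : Euc n → Euc n → ℝ → ℝ)
    (φ : Euc n → ℝ) : Prop :=
  IsVSub M H 0 φ M ∧
  ∀ x₀ ∈ M, ∃ V : Set (Euc n), IsOpen V ∧ x₀ ∈ V ∧
    ∃ c < (0:ℝ), IsVSub M H c φ (V ∩ M)

/-- The backward solution semigroup `T_t⁻`: the continuous function satisfying
`T_t⁻φ(x) = inf_{γ(t)=x} {φ(γ(0)) + ∫₀ᵗ L(γ,γ̇,T_τ⁻φ(γ(τ))) dτ}` over absolutely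
continuous curves in `M`. -/
def IsBackwardSemigroup (M : Set (Euc n)) (L : Euc n → Euc n → ℝ → ℝ)
    (φ : Euc n → ℝ) (Tm : ℝ → Euc n → ℝ) : Prop :=
  (∀ x ∈ M, Tm 0 x = φ x) ∧
  ContinuousOn (fun q : ℝ × Euc n => Tm q.1 q.2) (Ici 0 ×ˢ M) ∧
  ∀ t > (0:ℝ), ∀ x ∈ M,
    Tm t x = sInf {r | ∃ γ : ℝ → Euc n, AbsCont γ 0 t ∧
      (∀ τ ∈ Icc (0:ℝ) t, γ τ ∈ M) ∧ γ t = x ∧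
      r = φ (γ 0) + ∫ τ in (0:ℝ)..t, L (γ τ) (deriv γ τ) (Tm τ (γ τ))}

/-- The forward solution semigroup `T_t⁺`: the continuous function satisfying
`T_t⁺φ(x) = sup_{γ(0)=x} {φ(γ(t)) − ∫₀ᵗ L(γ,γ̇,T_{t−τ}⁺φ(γ(τ))) dτ}` over absolutely
continuous curves in `M`. -/
def IsForwardSemigroup (M : Set (Euc n)) (L : Euc n → Euc n → ℝ → ℝ)
    (φ : Euc n → ℝ) (Tp : ℝ → Euc n → ℝ) : Prop :=
  (∀ x ∈ M, Tp 0 x = φ x) ∧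
  ContinuousOn (fun q : ℝ × Euc n => Tp q.1 q.2) (Ici 0 ×ˢ M) ∧
  ∀ t > (0:ℝ), ∀ x ∈ M,
    Tp t x = sSup {r | ∃ γ : ℝ → Euc n, AbsCont γ 0 t ∧
      (∀ τ ∈ Icc (0:ℝ) t, γ τ ∈ M) ∧ γ 0 = x ∧
      r = φ (γ t) - ∫ τ in (0:ℝ)..t, L (γ τ) (deriv γ τ) (Tp (t - τ) (γ τ))}

/-- The backward implicit action function `h_{x₀,u₀}(x,t)`, characterized by the
implicit variational principle over Lipschitz curves. -/
def IsBackwardAction (M : Set (Euc n)) (L : Euc n → Euc n → ℝ → ℝ)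
    (hb : Euc n → ℝ → Euc n → ℝ → ℝ) : Prop :=
  ContinuousOn (fun q : Euc n × ℝ × Euc n × ℝ => hb q.1 q.2.1 q.2.2.1 q.2.2.2)
    (M ×ˢ (univ : Set ℝ) ×ˢ M ×ˢ Ioi 0) ∧
  ∀ x₀ ∈ M, ∀ u₀ : ℝ, ∀ x ∈ M, ∀ t > (0:ℝ),
    hb x₀ u₀ x t = u₀ + sInf {a | ∃ γ : ℝ → Euc n,
      (∃ K : ℝ≥0, LipschitzOnWith K γ (Icc 0 t)) ∧
      (∀ τ ∈ Icc (0:ℝ) t, γ τ ∈ M) ∧ γ 0 = x₀ ∧ γ t = x ∧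
      a = ∫ τ in (0:ℝ)..t, L (γ τ) (deriv γ τ) (hb x₀ u₀ (γ τ) τ)}

/-- The forward implicit action function `h^{x₀,u₀}(x,t)`, characterized by the
implicit variational principle over Lipschitz curves. -/
def IsForwardAction (M : Set (Euc n)) (L : Euc n → Euc n → ℝ → ℝ)
    (hf : Euc n → ℝ → Euc n → ℝ → ℝ) : Prop :=
  ContinuousOn (fun q : Euc n × ℝ × Euc n × ℝ => hf q.1 q.2.1 q.2.2.1 q.2.2.2)
    (M ×ˢ (univ : Set ℝ) ×ˢ M ×ˢ Ioi 0) ∧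
  ∀ x₀ ∈ M, ∀ u₀ : ℝ, ∀ x ∈ M, ∀ t > (0:ℝ),
    hf x₀ u₀ x t = u₀ - sInf {a | ∃ γ : ℝ → Euc n,
      (∃ K : ℝ≥0, LipschitzOnWith K γ (Icc 0 t)) ∧
      (∀ τ ∈ Icc (0:ℝ) t, γ τ ∈ M) ∧ γ 0 = x ∧ γ t = x₀ ∧
      a = ∫ τ in (0:ℝ)..t, L (γ τ) (deriv γ τ) (hf x₀ u₀ (γ τ) (t - τ))}

/-- The epigraph `Γ_φ = {(x,p,u) ∈ T*M × ℝ : u ≥ φ(x)}`. -/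
def Epi (M : Set (Euc n)) (φ : Euc n → ℝ) : Set (Euc n × Euc n × ℝ) :=
  {z | z.1 ∈ M ∧ φ z.1 ≤ z.2.2}

/-- The interior `Γ̊_φ = {(x,p,u) ∈ T*M × ℝ : u > φ(x)}` of the epigraph. -/
def EpiInt (M : Set (Euc n)) (φ : Euc n → ℝ) : Set (Euc n × Euc n × ℝ) :=
  {z | z.1 ∈ M ∧ φ z.1 < z.2.2}

/-- Piecewise `C¹` curve on `[a,b]`. -/
def PiecewiseC1On (γ : ℝ → Euc n) (a b : ℝ) : Prop :=
  ContinuousOn γ (Icc a b) ∧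
  ∃ (k : ℕ) (τ : ℕ → ℝ), τ 0 = a ∧ τ k = b ∧ (∀ i < k, τ i < τ (i + 1)) ∧
    ∀ i < k, ContDiffOn ℝ 1 γ (Icc (τ i) (τ (i + 1)))

/-!
Time reversal `γ(τ) ↦ γ(t - τ)`, `u ↦ -u` turns the forward action into a backward action for the
Lagrangian `L(x, -v, -u)`, so it suffices to show that reversing a value function `w` from its
end value `w(x, t)` recovers its starting value. Along any curve `γ`, the value `w(γ(τ), τ)` is a
subsolution of the ODE `e' = L(γ, γ', e)`; almost minimizing curves for `w` are approximate
solutions. Since `L` is Lipschitz in `e`, Grönwall's inequality compares the reversed value function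
with `w` along an almost minimizing curve of either one, and gives one inequality each.
-/
section Gronwall

variable {a b c d r δ ε K x : ℝ} {f F v : ℝ → ℝ}

lemma intervalIntegrable_of_subinterval (hF : IntervalIntegrable F volume a b) (hac : a ≤ c)
    (hcd : c ≤ d) (hdb : d ≤ b) : IntervalIntegrable F volume c d :=
  hF.mono_set (by
    rw [uIcc_of_le hcd, uIcc_of_le (hac.trans (hcd.trans hdb))]
    exact Icc_subset_Icc hac hdb)

lemma nonpos_of_forall_pos_le_mul (h : ∀ ε > 0, a ≤ ε * c) : a ≤ 0 := by
  have hcont : Continuous fun ε : ℝ => ε * c := by fun_prop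
  have hlim : Tendsto (fun ε : ℝ => ε * c) (𝓝[>] 0) (𝓝 0) :=
    (hcont.tendsto' 0 0 (zero_mul c)).mono_left nhdsWithin_le_nhds
  exact ge_of_tendsto hlim (eventually_nhdsWithin_of_forall h)

lemma gronwallBound_mul_mul (c δ K ε x : ℝ) :
    gronwallBound (c * δ) K (c * ε) x = c * gronwallBound δ K ε x := by
  unfold gronwallBound
  split_ifs <;> ring

lemma gronwallBound_nonneg (hδ : 0 ≤ δ) (hε : 0 ≤ ε) (hK : 0 ≤ K) (hx : 0 ≤ x) :
    0 ≤ gronwallBound δ K ε x :=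
  calc 0 ≤ δ := hδ
    _ = gronwallBound δ K ε 0 := (gronwallBound_x0 δ K ε).symm
    _ ≤ gronwallBound δ K ε x := gronwallBound_mono hδ hε hK hx

lemma frequently_slope_lt_of_sub_le_integral (hx : x ∈ Ico a b) (hv : ContinuousOn v (Icc a b))
    (hf : ∀ z ∈ Icc x b, f z - f x ≤ ∫ τ in x..z, v τ) (hr : v x < r) :
    ∃ᶠ z in 𝓝[>] x, slope f x z < r := by
  have hxb : Icc x b ⊆ Icc a b := Icc_subset_Icc_left hx.1
  have hnhds : Icc x b ∈ 𝓝[>] x := mem_of_superset (Ioc_mem_nhdsGT hx.2) Ioc_subset_Icc_self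
  have hderiv : HasDerivWithinAt (fun z => ∫ τ in x..z, v τ) (v x) (Ioi x) x :=
    (intervalIntegral.integral_hasDerivWithinAt_right (s := Ici x) (t := Ioi x) (by simp)
      ⟨Icc x b, hnhds, (hv.mono hxb).aestronglyMeasurable measurableSet_Icc⟩
      ((hv.mono hxb x (left_mem_Icc.2 hx.2.le)).mono_of_mem_nhdsWithin hnhds)).Ioi_of_Ici
  have hslope :=
    ((hasDerivWithinAt_iff_tendsto_slope' self_notMem_Ioi).1 hderiv).eventually_lt_const hr
  refine Eventually.frequently ?_
  filter_upwards [hslope, Ioc_mem_nhdsGT hx.2] with z hzr hz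
  refine lt_of_le_of_lt ?_ hzr
  simp only [slope_def_field, intervalIntegral.integral_same, sub_zero]
  have := hf z ⟨hz.1.le, hz.2⟩
  have := sub_pos.2 hz.1
  gcongr

lemma le_gronwallBound_of_sub_le_integral (hab : a ≤ b) (hδ : 0 ≤ δ) (hε : 0 ≤ ε) (hK : 0 ≤ K)
    (hf : ContinuousOn f (Icc a b))
    (hsub : ∀ r ∈ Icc a b, ∀ s ∈ Icc r b, f s - f r ≤ ∫ τ in r..s, (ε + K * |f τ|))
    (ha : f a ≤ δ) : f b ≤ gronwallBound δ K ε (b - a) := by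
  have hlt : ∀ ε' > ε, f b ≤ gronwallBound δ K ε' (b - a) := by
    intro ε' hε'
    refine image_le_of_liminf_slope_right_lt_deriv_boundary hf
      (f' := fun r => ε + K * |f r|) (B := fun r => gronwallBound δ K ε' (r - a))
      (fun x hx r hr => frequently_slope_lt_of_sub_le_integral hx (by fun_prop)
        (hsub x (Ico_subset_Icc_self hx)) hr)
      (by rwa [sub_self, gronwallBound_x0]) (hasDerivAt_gronwallBound_shift δ K ε' · a)
      (fun x hx hfB => ?_) (right_mem_Icc.2 hab)
    have hB := gronwallBound_nonneg hδ (hε.trans hε'.le) hK (sub_nonneg.2 hx.1)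
    rw [hfB, abs_of_nonneg hB]
    linarith
  have hlim : Tendsto (fun ε' => gronwallBound δ K ε' (b - a)) (𝓝[>] ε)
      (𝓝 (gronwallBound δ K ε (b - a))) :=
    ((gronwallBound_continuous_ε δ K (b - a)).tendsto ε).mono_left nhdsWithin_le_nhds
  exact ge_of_tendsto hlim (eventually_nhdsWithin_of_forall hlt)

/- The hypothesis is invariant under `f ↦ -f (a + b - ·)`. -/
lemma neg_gronwallBound_le_of_sub_le_integral (hab : a ≤ b) (hδ : 0 ≤ δ) (hε : 0 ≤ ε)
    (hK : 0 ≤ K) (hf : ContinuousOn f (Icc a b))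
    (hsub : ∀ r ∈ Icc a b, ∀ s ∈ Icc r b, f s - f r ≤ ∫ τ in r..s, (ε + K * |f τ|))
    (hb : -δ ≤ f b) : -gronwallBound δ K ε (b - a) ≤ f a := by
  have hrev := le_gronwallBound_of_sub_le_integral (f := fun s => -f (a + b - s)) hab hδ hε hK
    (hf.comp (by fun_prop) fun s hs => ⟨by linarith [hs.2], by linarith [hs.1]⟩).neg
    (fun r hr s hs => ?_) (by simpa [neg_le] using hb)
  · simpa [neg_le] using hrev
  · have h := hsub (a + b - s) ⟨by linarith [hs.2], by linarith [hr.1, hs.1]⟩ (a + b - r)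
      ⟨by linarith [hs.1], by linarith [hr.1]⟩
    simp only [abs_neg]
    rw [intervalIntegral.integral_comp_sub_left fun τ => ε + K * |f τ|]
    linarith

lemma neg_gronwallBound_le_integral (hab : a ≤ b) (hε : 0 ≤ ε) (hK : 0 ≤ K)
    (hF : IntervalIntegrable F volume a b)
    (hlow : ∀ r ∈ Ioo a b, -(ε + K * |∫ τ in a..r, F τ|) ≤ F r) :
    -gronwallBound 0 K ε (b - a) ≤ ∫ τ in a..b, F τ := by
  have hcont : ContinuousOn (fun r => ∫ τ in a..r, F τ) (Icc a b) := by
    simpa only [uIcc_of_le hab] using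
      intervalIntegral.continuousOn_primitive_interval' hF left_mem_uIcc
  have hupper := le_gronwallBound_of_sub_le_integral (f := fun r => -∫ τ in a..r, F τ) hab le_rfl hε
    hK hcont.neg (fun r hr s hs => ?_) (by simp)
  · linarith
  have hrs := intervalIntegrable_of_subinterval hF hr.1 hs.1 hs.2
  have hadd := intervalIntegral.integral_add_adjacent_intervals
    (intervalIntegrable_of_subinterval hF le_rfl hr.1 hr.2) hrs
  have hcont' := hcont.mono (Icc_subset_Icc hr.1 hs.2)
  calc (-∫ τ in a..s, F τ) - (-∫ τ in a..r, F τ) = ∫ τ in r..s, -F τ := by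
        rw [intervalIntegral.integral_neg]; linarith
    _ ≤ ∫ τ in r..s, (ε + K * |(-∫ σ in a..τ, F σ)|) := by
        refine intervalIntegral.integral_mono_on_of_le_Ioo hs.1 hrs.neg
          (ContinuousOn.intervalIntegrable_of_Icc hs.1 (by fun_prop)) fun τ hτ => ?_
        rw [abs_neg]
        exact neg_le.1 (hlow τ ⟨hr.1.trans_lt hτ.1, hτ.2.trans_le hs.2⟩)

end Gronwall

section Curves

variable {X : Type*} [PseudoMetricSpace X]

lemma lipschitzOnWith_ite_le {f g : ℝ → X} {K : ℝ≥0} {a r b : ℝ}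
    (hf : LipschitzOnWith K f (Icc a r)) (hg : LipschitzOnWith K g (Icc r b)) (hfg : f r = g r) :
    LipschitzOnWith K (fun τ => if τ ≤ r then f τ else g τ) (Icc a b) := by
  have hle : ∀ s ∈ Icc a b, ∀ t ∈ Icc a b, s ≤ t →
      dist (if s ≤ r then f s else g s) (if t ≤ r then f t else g t) ≤ K * dist s t := by
    intro s hs t ht hst
    rcases le_or_gt t r with htr | hrt
    · rw [if_pos (hst.trans htr), if_pos htr]
      exact hf.dist_le_mul s ⟨hs.1, hst.trans htr⟩ t ⟨ht.1, htr⟩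
    rcases le_or_gt s r with hsr | hrs
    · rw [if_pos hsr, if_neg hrt.not_ge]
      calc dist (f s) (g t) ≤ dist (f s) (f r) + dist (g r) (g t) := by
            rw [← hfg]; exact dist_triangle _ _ _
        _ ≤ K * dist s r + K * dist r t :=
            add_le_add (hf.dist_le_mul s ⟨hs.1, hsr⟩ r ⟨hs.1.trans hsr, le_rfl⟩)
              (hg.dist_le_mul r ⟨le_rfl, hrt.le.trans ht.2⟩ t ⟨hrt.le, ht.2⟩)
        _ = K * dist s t := by
            rw [Real.dist_eq, Real.dist_eq, Real.dist_eq, abs_of_nonpos (sub_nonpos.2 hsr),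
              abs_of_neg (sub_neg.2 hrt), abs_of_nonpos (sub_nonpos.2 hst)]
            ring
    · rw [if_neg hrs.not_ge, if_neg hrt.not_ge]
      exact hg.dist_le_mul s ⟨hrs.le, hs.2⟩ t ⟨hrt.le, ht.2⟩
  refine LipschitzOnWith.of_dist_le_mul fun s hs t ht => ?_
  rcases le_total s t with hst | hts
  · exact hle s hs t ht hst
  · simpa only [dist_comm] using hle t ht s hs hts

/-- `γ` is a Lipschitz curve in `M` joining `x` to `y` in time `t`; its values outside `[0, t]` are
irrelevant. -/
structure ConnectingCurve (M : Set X) (x y : X) (t : ℝ) (γ : ℝ → X) : Prop where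
  exists_lipschitzOnWith : ∃ K : ℝ≥0, LipschitzOnWith K γ (Icc 0 t)
  mapsTo : MapsTo γ (Icc 0 t) M
  source : γ 0 = x
  target : γ t = y

namespace ConnectingCurve

variable {M : Set X} {x y z : X} {r t : ℝ} {γ ζ : ℝ → X}

lemma target_mem (hγ : ConnectingCurve M x y t γ) (ht : 0 ≤ t) : y ∈ M :=
  hγ.target ▸ hγ.mapsTo (right_mem_Icc.2 ht)

lemma continuousOn (hγ : ConnectingCurve M x y t γ) : ContinuousOn γ (Icc 0 t) :=
  let ⟨_, hK⟩ := hγ.exists_lipschitzOnWith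
  hK.continuousOn

lemma continuousOn_uncurry_comp {Y : Type*} [TopologicalSpace Y] {w : X → ℝ → Y}
    (hγ : ConnectingCurve M x y t γ) (hw : ContinuousOn (fun q : X × ℝ => w q.1 q.2) (M ×ˢ Ioi 0)) :
    ContinuousOn (fun τ => w (γ τ) τ) (Ioc 0 t) :=
  hw.comp ((hγ.continuousOn.mono Ioc_subset_Icc_self).prodMk continuousOn_id)
    fun _ hτ => ⟨hγ.mapsTo (Ioc_subset_Icc_self hτ), hτ.1⟩

lemma restrict (hγ : ConnectingCurve M x y t γ) (hrt : r ≤ t) :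
    ConnectingCurve M x (γ r) r γ where
  exists_lipschitzOnWith :=
    let ⟨K, hK⟩ := hγ.exists_lipschitzOnWith
    ⟨K, hK.mono (Icc_subset_Icc_right hrt)⟩
  mapsTo := hγ.mapsTo.mono_left (Icc_subset_Icc_right hrt)
  source := hγ.source
  target := rfl

lemma reverse (hγ : ConnectingCurve M x y t γ) :
    ConnectingCurve M y x t fun τ => γ (t - τ) := by
  obtain ⟨⟨K, hK⟩, hM, rfl, rfl⟩ := hγ
  have hmaps : MapsTo (fun τ => t - τ) (Icc 0 t) (Icc 0 t) := fun τ hτ =>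
    ⟨sub_nonneg.2 hτ.2, sub_le_self t hτ.1⟩
  refine ⟨⟨K, LipschitzOnWith.of_dist_le_mul fun a ha b hb => ?_⟩, hM.comp hmaps, by simp, by simp⟩
  simpa only [dist_sub_left] using hK.dist_le_mul _ (hmaps ha) _ (hmaps hb)

lemma splice (hζ : ConnectingCurve M x (γ r) r ζ) (hγ : ConnectingCurve M z y t γ)
    (hr : 0 ≤ r) (hrt : r ≤ t) :
    ConnectingCurve M x y t fun τ => if τ ≤ r then ζ τ else γ τ := by
  obtain ⟨⟨K₁, hK₁⟩, hM₁, h₁0, h₁r⟩ := hζ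
  obtain ⟨⟨K₂, hK₂⟩, hM₂, -, h₂t⟩ := hγ
  refine ⟨⟨max K₁ K₂, lipschitzOnWith_ite_le (hK₁.weaken (le_max_left _ _))
    ((hK₂.mono (Icc_subset_Icc_left hr)).weaken (le_max_right _ _)) h₁r⟩, fun τ hτ => ?_,
    by rw [if_pos hr, h₁0], ?_⟩
  · split_ifs with h
    · exact hM₁ ⟨hτ.1, h⟩
    · exact hM₂ hτ
  · rcases hrt.eq_or_lt with rfl | hrt
    · rw [if_pos le_rfl, h₁r, h₂t]
    · rw [if_neg hrt.not_ge, h₂t]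

end ConnectingCurve

end Curves

section Lagrangian

/-- The Lagrangian governing the curves `t ↦ (γ(-t), -u(-t))` when `L` governs `(γ, u)`. -/
def reversedLagrangian {E : Type*} [Neg E] (L : E → E → ℝ → ℝ) : E → E → ℝ → ℝ :=
  fun x v u => L x (-v) (-u)

lemma reversedLagrangian_reversedLagrangian {E : Type*} [InvolutiveNeg E] (L : E → E → ℝ → ℝ) :
    reversedLagrangian (reversedLagrangian L) = L := by
  funext x v u
  simp only [reversedLagrangian, neg_neg]

variable {E : Type*} [NormedAddCommGroup E] [MeasurableSpace E] {M : Set E} {L : E → E → ℝ → ℝ}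
  {lam : ℝ≥0} {x : E}

/-- What the implicit variational principle over `M` needs of a Lagrangian. Like the variational
principle itself, these properties are invariant under time reversal. -/
structure TameLagrangian (M : Set E) (L : E → E → ℝ → ℝ) (lam : ℝ≥0) : Prop where
  measurable : Measurable fun z : E × E × ℝ => L z.1 z.2.1 z.2.2
  lipschitzWith : ∀ x ∈ M, ∀ v, LipschitzWith lam (L x v)
  exists_forall_ge : ∃ C, ∀ x ∈ M, ∀ v, C ≤ L x v 0
  exists_forall_le : ∀ K, ∃ C, ∀ x ∈ M, ∀ v, ‖v‖ ≤ K → L x v 0 ≤ C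

namespace TameLagrangian

lemma abs_sub_le (hL : TameLagrangian M L lam) (hx : x ∈ M) (v : E) (u u' : ℝ) :
    |L x v u - L x v u'| ≤ lam * |u - u'| :=
  (hL.lipschitzWith x hx v).dist_le_mul u u'

lemma exists_neg_le (hL : TameLagrangian M L lam) :
    ∃ C ≥ 0, ∀ x ∈ M, ∀ v u, -(C + lam * |u|) ≤ L x v u := by
  obtain ⟨C, hC⟩ := hL.exists_forall_ge
  refine ⟨|C|, abs_nonneg C, fun x hx v u => ?_⟩
  have hlip := neg_le_of_abs_le (hL.abs_sub_le hx v u 0)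
  rw [sub_zero] at hlip
  linarith [hC x hx v, neg_abs_le C]

lemma exists_abs_le (hL : TameLagrangian M L lam) (K : ℝ) :
    ∃ C, ∀ x ∈ M, ∀ v, ‖v‖ ≤ K → ∀ u, |L x v u| ≤ C + lam * |u| := by
  obtain ⟨C, hC⟩ := hL.exists_forall_ge
  obtain ⟨D, hD⟩ := hL.exists_forall_le K
  refine ⟨max |C| |D|, fun x hx v hv u => ?_⟩
  calc |L x v u| ≤ |L x v 0| + |L x v u - L x v 0| := by
        simpa only [add_sub_cancel] using abs_add_le (L x v 0) (L x v u - L x v 0)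
    _ ≤ max |C| |D| + lam * |u| := by
        refine add_le_add (abs_le_max_abs_abs (hC x hx v) (hD x hx v hv)) ?_
        simpa only [sub_zero] using hL.abs_sub_le hx v u 0

lemma reversed [BorelSpace E] (hL : TameLagrangian M L lam) :
    TameLagrangian M (reversedLagrangian L) lam where
  measurable := hL.measurable.comp
    (measurable_fst.prodMk (measurable_snd.fst.neg.prodMk measurable_snd.snd.neg))
  lipschitzWith x hx v :=
    LipschitzWith.of_dist_le_mul fun u u' => by
      simpa only [reversedLagrangian, dist_neg_neg] using
        (hL.lipschitzWith x hx (-v)).dist_le_mul (-u) (-u')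
  exists_forall_ge := by
    obtain ⟨C, hC⟩ := hL.exists_forall_ge
    exact ⟨C, fun x hx v => by simpa only [reversedLagrangian, neg_zero] using hC x hx (-v)⟩
  exists_forall_le K := by
    obtain ⟨C, hC⟩ := hL.exists_forall_le K
    exact ⟨C, fun x hx v hv => by
      simpa only [reversedLagrangian, neg_zero] using hC x hx (-v) (by rwa [norm_neg])⟩

end TameLagrangian

end Lagrangian

section ValueFunction

variable {E : Type*} [NormedAddCommGroup E] [NormedSpace ℝ E] {M : Set E} {L : E → E → ℝ → ℝ}
  {lam : ℝ≥0} {x x₀ y z : E} {u₀ a r s t B C : ℝ} {γ ζ : ℝ → E} {w : E → ℝ → ℝ}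

/-- The Lagrangian along the curve `γ`, with its value argument prescribed by `w`. -/
def runningCost (L : E → E → ℝ → ℝ) (w : E → ℝ → ℝ) (γ : ℝ → E) (τ : ℝ) : ℝ :=
  L (γ τ) (deriv γ τ) (w (γ τ) τ)

/-- The actions of the curves in `M` joining `x` to `y` in time `t`. A curve whose running cost is
not integrable contributes the junk value `0`. -/
def actionSet (M : Set E) (L : E → E → ℝ → ℝ) (w : E → ℝ → ℝ) (x y : E) (t : ℝ) : Set ℝ :=
  {a | ∃ γ, ConnectingCurve M x y t γ ∧ a = ∫ τ in (0 : ℝ)..t, runningCost L w γ τ}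

/-- `w` solves the implicit variational principle of the Lagrangian `L` over the curves in `M` which
start at `x₀` with the value `u₀`. Since `sInf` is `0` on `∅` and on sets which are not bounded
below, boundedness of the actions has to be proved. -/
structure IsValueFunction (M : Set E) (L : E → E → ℝ → ℝ) (x₀ : E) (u₀ : ℝ) (w : E → ℝ → ℝ) :
    Prop where
  continuousOn : ContinuousOn (fun q : E × ℝ => w q.1 q.2) (M ×ˢ Ioi 0)
  eq_add_sInf : ∀ y ∈ M, ∀ t > 0, w y t = u₀ + sInf (actionSet M L w x₀ y t)

namespace IsValueFunction

lemma eq_of_not_bddBelow (hw : IsValueFunction M L x₀ u₀ w) (hy : y ∈ M) (ht : 0 < t)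
    (h : ¬BddBelow (actionSet M L w x₀ y t)) : w y t = u₀ := by
  rw [hw.eq_add_sInf y hy t ht, Real.sInf_of_not_bddBelow h, add_zero]

lemma eq_of_forall_not_connectingCurve (hw : IsValueFunction M L x₀ u₀ w) (hy : y ∈ M) (ht : 0 < t)
    (h : ∀ γ, ¬ConnectingCurve M x₀ y t γ) : w y t = u₀ := by
  have hempty : actionSet M L w x₀ y t = ∅ :=
    eq_empty_of_forall_notMem fun _ ⟨γ, hγ, _⟩ => h γ hγ
  rw [hw.eq_add_sInf y hy t ht, hempty, Real.sInf_empty, add_zero]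

lemma le_add_integral_of_bddBelow (hw : IsValueFunction M L x₀ u₀ w)
    (hγ : ConnectingCurve M x₀ y t γ) (ht : 0 < t) (h : BddBelow (actionSet M L w x₀ y t)) :
    w y t ≤ u₀ + ∫ τ in (0 : ℝ)..t, runningCost L w γ τ := by
  rw [hw.eq_add_sInf y (hγ.target_mem ht.le) t ht]
  gcongr
  exact csInf_le h ⟨γ, hγ, rfl⟩

lemma le_add_abs_integral (hw : IsValueFunction M L x₀ u₀ w) (hγ : ConnectingCurve M x₀ y t γ)
    (ht : 0 < t) : w y t ≤ u₀ + |∫ τ in (0 : ℝ)..t, runningCost L w γ τ| := by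
  by_cases h : BddBelow (actionSet M L w x₀ y t)
  · exact (hw.le_add_integral_of_bddBelow hγ ht h).trans (by gcongr; exact le_abs_self _)
  · rw [hw.eq_of_not_bddBelow (hγ.target_mem ht.le) ht h]
    exact le_add_of_nonneg_right (abs_nonneg _)

lemma exists_integral_lt (hw : IsValueFunction M L x₀ u₀ w) (hy : y ∈ M) (ht : 0 < t)
    (hlt : w y t < u₀) :
    ∃ γ, ConnectingCurve M x₀ y t γ ∧ IntervalIntegrable (runningCost L w γ) volume 0 t ∧
      u₀ + ∫ τ in (0 : ℝ)..t, runningCost L w γ τ < w y t + 1 := by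
  have heq := hw.eq_add_sInf y hy t ht
  have hneg : sInf (actionSet M L w x₀ y t) < 0 := by linarith
  have hne : (actionSet M L w x₀ y t).Nonempty := by
    rw [nonempty_iff_ne_empty]
    rintro h
    rw [h, Real.sInf_empty] at hneg
    exact hneg.false
  obtain ⟨_, ⟨γ, hγ, rfl⟩, hγlt⟩ := exists_lt_of_csInf_lt hne
    (lt_min (lt_add_one (sInf (actionSet M L w x₀ y t))) hneg)
  obtain ⟨hγ1, hγ0⟩ := lt_min_iff.1 hγlt
  refine ⟨γ, hγ, ?_, by linarith⟩
  by_contra h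
  exact hγ0.ne (intervalIntegral.integral_undef h)

end IsValueFunction

lemma neg_gronwallBound_le_integral_runningCost (hC : 0 ≤ C) (hB : 0 ≤ B)
    (hL : ∀ x ∈ M, ∀ v u, -(C + lam * |u|) ≤ L x v u) (ht : 0 ≤ t)
    (hγ : ConnectingCurve M x y t γ)
    (hint : IntervalIntegrable (runningCost L w γ) volume 0 t)
    (hw : ∀ r ∈ Ioo 0 t, |w (γ r) r| ≤ B + |∫ τ in (0 : ℝ)..r, runningCost L w γ τ|) :
    -gronwallBound 0 lam (C + lam * B) t ≤ ∫ τ in (0 : ℝ)..t, runningCost L w γ τ := by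
  have hlow : ∀ r ∈ Ioo 0 t, -(C + lam * B + lam * |∫ τ in (0 : ℝ)..r, runningCost L w γ τ|) ≤
      runningCost L w γ r := fun r hr =>
    calc -(C + lam * B + lam * |∫ τ in (0 : ℝ)..r, runningCost L w γ τ|)
        = -(C + lam * (B + |∫ τ in (0 : ℝ)..r, runningCost L w γ τ|)) := by ring
      _ ≤ -(C + lam * |w (γ r) r|) := by have := hw r hr; gcongr
      _ ≤ runningCost L w γ r := hL _ (hγ.mapsTo (Ioo_subset_Icc_self hr)) _ _
  simpa only [sub_zero] using
    neg_gronwallBound_le_integral ht (by positivity) lam.coe_nonneg hint hlow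

variable [MeasurableSpace E] [BorelSpace E] [CompleteSpace E]

namespace TameLagrangian

lemma intervalIntegrable_of_abs_le (hL : TameLagrangian M L lam) (hγ : ConnectingCurve M x y t γ)
    (hw : ContinuousOn (fun q : E × ℝ => w q.1 q.2) (M ×ˢ Ioi 0)) (ha : 0 ≤ a)
    (hat : a ≤ t) (hB : ∀ τ ∈ Ioo a t, |w (γ τ) τ| ≤ B) :
    IntervalIntegrable (runningCost L w γ) volume a t := by
  have hsub : Ioo a t ⊆ Ioo 0 t := Ioo_subset_Ioo_left ha
  have hwγ := (hγ.continuousOn_uncurry_comp hw).mono (hsub.trans Ioo_subset_Ioc_self)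
  have hcont := hγ.continuousOn.mono (hsub.trans Ioo_subset_Icc_self)
  obtain ⟨K, hK⟩ := hγ.exists_lipschitzOnWith
  obtain ⟨C, hC⟩ := hL.exists_abs_le K
  rw [intervalIntegrable_iff_integrableOn_Ioo_of_le hat]
  refine Integrable.of_bound (AEMeasurable.aestronglyMeasurable ?_) (C + lam * B) ?_
  · exact hL.measurable.comp_aemeasurable ((hcont.aemeasurable measurableSet_Ioo).prodMk
      ((measurable_deriv γ).aemeasurable.prodMk (hwγ.aemeasurable measurableSet_Ioo)))
  · refine (ae_restrict_mem measurableSet_Ioo).mono fun τ hτ => ?_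
    have hderiv : ‖deriv γ τ‖ ≤ K :=
      norm_deriv_le_of_lipschitzOn (Icc_mem_nhds (hsub hτ).1 hτ.2) hK
    refine (hC _ (hγ.mapsTo (Ioo_subset_Icc_self (hsub hτ))) _ hderiv _).trans ?_
    have := hB τ hτ
    gcongr

lemma intervalIntegrable_of_pos (hL : TameLagrangian M L lam) (hγ : ConnectingCurve M x y t γ)
    (hw : ContinuousOn (fun q : E × ℝ => w q.1 q.2) (M ×ˢ Ioi 0)) (hr : 0 < r) (hrt : r ≤ t) :
    IntervalIntegrable (runningCost L w γ) volume r t := by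
  obtain ⟨B, hB⟩ := isCompact_Icc.exists_bound_of_continuousOn
    ((hγ.continuousOn_uncurry_comp hw).mono (Icc_subset_Ioc hr le_rfl))
  exact hL.intervalIntegrable_of_abs_le hγ hw hr.le hrt fun τ hτ => hB τ (Ioo_subset_Icc_self hτ)

lemma add_integral_mem_actionSet (hL : TameLagrangian M L lam)
    (hζ : ConnectingCurve M x (γ r) r ζ) (hγ : ConnectingCurve M z y t γ)
    (hw : ContinuousOn (fun q : E × ℝ => w q.1 q.2) (M ×ˢ Ioi 0)) (hr : 0 < r)
    (hrt : r ≤ t) (hint : IntervalIntegrable (runningCost L w ζ) volume 0 r) :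
    (∫ τ in (0 : ℝ)..r, runningCost L w ζ τ) + (∫ τ in r..t, runningCost L w γ τ) ∈
      actionSet M L w x y t := by
  set η : ℝ → E := fun τ => if τ ≤ r then ζ τ else γ τ
  have hleft : EqOn (runningCost L w ζ) (runningCost L w η) (Ioo 0 r) := fun τ hτ => by
    have hev : η =ᶠ[𝓝 τ] ζ := by
      filter_upwards [Iio_mem_nhds hτ.2] with s hs using if_pos (le_of_lt hs)
    rw [runningCost, runningCost, hev.deriv_eq, hev.eq_of_nhds]
  have hright : EqOn (runningCost L w γ) (runningCost L w η) (Ioo r t) := fun τ hτ => by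
    have hev : η =ᶠ[𝓝 τ] γ := by
      filter_upwards [Ioi_mem_nhds hτ.1] with s hs using if_neg (not_le.2 hs)
    rw [runningCost, runningCost, hev.deriv_eq, hev.eq_of_nhds]
  refine ⟨η, hζ.splice hγ hr.le hrt, ?_⟩
  rw [intervalIntegral.integral_congr_Ioo_of_le hr.le hleft,
    intervalIntegral.integral_congr_Ioo_of_le hrt hright]
  exact intervalIntegral.integral_add_adjacent_intervals
    (hint.congr_uIoo (by rwa [uIoo_of_le hr.le]))
    ((hL.intervalIntegrable_of_pos hγ hw hr hrt).congr_uIoo (by rwa [uIoo_of_le hrt]))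

end TameLagrangian

namespace IsValueFunction

/- Continuing curves to `γ r` along `γ` shows that an almost minimizing `γ` is almost minimizing up
to the earlier time `r`, except for the curves of nonintegrable running cost, whose action is `0`.
-/
lemma abs_le_of_integral_lt (hL : TameLagrangian M L lam) (hw : IsValueFunction M L x₀ u₀ w)
    (hbdd : BddBelow (actionSet M L w x₀ y t)) (hγ : ConnectingCurve M x₀ y t γ)
    (hint : IntervalIntegrable (runningCost L w γ) volume 0 t)
    (hlt : u₀ + ∫ τ in (0 : ℝ)..t, runningCost L w γ τ < w y t + 1) (hr : r ∈ Ioo 0 t) :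
    |w (γ r) r| ≤ |u₀| + 1 + |∫ τ in (0 : ℝ)..r, runningCost L w γ τ| := by
  have hγr := hγ.restrict hr.2.le
  set I := ∫ τ in (0 : ℝ)..r, runningCost L w γ τ
  have hsplit := intervalIntegral.integral_add_adjacent_intervals
    (intervalIntegrable_of_subinterval hint le_rfl hr.1.le hr.2.le)
    (hL.intervalIntegrable_of_pos hγ hw.continuousOn hr.1 hr.2.le)
  have heq := hw.eq_add_sInf y (hγ.target_mem (hr.1.trans hr.2).le) t (hr.1.trans hr.2)
  have hmin : ∀ b ∈ actionSet M L w x₀ (γ r) r, min 0 (I - 1) ≤ b := by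
    rintro _ ⟨ζ, hζ, rfl⟩
    by_cases hζint : IntervalIntegrable (runningCost L w ζ) volume 0 r
    · have := csInf_le hbdd
        (hL.add_integral_mem_actionSet hζ hγ hw.continuousOn hr.1 hr.2.le hζint)
      exact (min_le_right _ _).trans (by linarith)
    · rw [intervalIntegral.integral_undef hζint]
      exact min_le_left _ _
  have hupper := hw.le_add_integral_of_bddBelow hγr hr.1 ⟨_, hmin⟩
  have hlower : u₀ + min 0 (I - 1) ≤ w (γ r) r := by
    rw [hw.eq_add_sInf (γ r) (hγr.target_mem hr.1.le) r hr.1]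
    gcongr
    exact le_csInf ⟨_, γ, hγr, rfl⟩ hmin
  have hmin_abs : -(1 + |I|) ≤ min 0 (I - 1) :=
    le_min (by linarith [abs_nonneg I]) (by linarith [neg_abs_le I])
  exact abs_le.2 ⟨by linarith [neg_abs_le u₀], by linarith [le_abs_self u₀, le_abs_self I]⟩

lemma exists_neg_le (hL : TameLagrangian M L lam) (hw : IsValueFunction M L x₀ u₀ w) (T : ℝ) :
    ∃ B ≥ 0, ∀ y ∈ M, ∀ t ∈ Ioc 0 T, -B ≤ w y t := by
  obtain ⟨C, hC0, hC⟩ := hL.exists_neg_le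
  have hgnn (t : ℝ) (ht : 0 ≤ t) : 0 ≤ gronwallBound 0 lam (C + lam * (|u₀| + 1)) t :=
    gronwallBound_nonneg le_rfl (by positivity) lam.coe_nonneg ht
  rcases le_or_gt T 0 with hT | hT
  · exact ⟨0, le_rfl, fun y _ t ht => absurd (ht.1.trans_le ht.2) hT.not_gt⟩
  refine ⟨|u₀| + 1 + gronwallBound 0 lam (C + lam * (|u₀| + 1)) T,
    by linarith [hgnn T hT.le, abs_nonneg u₀], fun y hy t ht => ?_⟩
  rcases le_or_gt u₀ (w y t) with hle | hlt
  · linarith [neg_abs_le u₀, hgnn T hT.le]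
  by_cases hbdd : BddBelow (actionSet M L w x₀ y t)
  swap
  · linarith [hw.eq_of_not_bddBelow hy ht.1 hbdd]
  obtain ⟨γ, hγ, hint, hγlt⟩ := hw.exists_integral_lt hy ht.1 hlt
  have hlow := neg_gronwallBound_le_integral_runningCost hC0 (by positivity) hC ht.1.le hγ hint
    fun r hr => hw.abs_le_of_integral_lt hL hbdd hγ hint hγlt hr
  have hmono : gronwallBound 0 lam (C + lam * (|u₀| + 1)) t ≤
      gronwallBound 0 lam (C + lam * (|u₀| + 1)) T :=
    gronwallBound_mono le_rfl (by positivity) lam.coe_nonneg ht.2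
  linarith [neg_abs_le u₀]

lemma exists_abs_le (hL : TameLagrangian M L lam) (hw : IsValueFunction M L x₀ u₀ w) (T : ℝ) :
    ∃ B ≥ 0, ∀ ⦃y t γ⦄, ConnectingCurve M x₀ y t γ → t ∈ Ioc 0 T →
      |w y t| ≤ B + |∫ τ in (0 : ℝ)..t, runningCost L w γ τ| := by
  obtain ⟨B, hB0, hB⟩ := hw.exists_neg_le hL T
  refine ⟨B + |u₀|, by positivity, fun y t γ hγ ht => abs_le.2 ⟨?_, ?_⟩⟩
  · linarith [hB y (hγ.target_mem ht.1.le) t ht, abs_nonneg u₀,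
      abs_nonneg (∫ τ in (0 : ℝ)..t, runningCost L w γ τ)]
  · linarith [hw.le_add_abs_integral hγ ht.1, le_abs_self u₀]

/- If the running cost were not integrable, all its integrals from `0` would be `0`, so that `w`
would be bounded along `γ`, and hence the running cost too. -/
lemma intervalIntegrable (hL : TameLagrangian M L lam) (hw : IsValueFunction M L x₀ u₀ w)
    (hγ : ConnectingCurve M x₀ y t γ) (ht : 0 ≤ t) :
    IntervalIntegrable (runningCost L w γ) volume 0 t := by
  by_contra hnot
  obtain ⟨B, -, hB⟩ := hw.exists_abs_le hL t
  refine hnot (hL.intervalIntegrable_of_abs_le hγ hw.continuousOn le_rfl ht (B := B)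
    fun r hr => ?_)
  have hnotr : ¬IntervalIntegrable (runningCost L w γ) volume 0 r := fun h =>
    hnot (h.trans (hL.intervalIntegrable_of_pos hγ hw.continuousOn hr.1 hr.2.le))
  simpa only [intervalIntegral.integral_undef hnotr, abs_zero, add_zero] using
    hB (hγ.restrict hr.2.le) (Ioo_subset_Ioc_self hr)

lemma bddBelow (hL : TameLagrangian M L lam) (hw : IsValueFunction M L x₀ u₀ w) (ht : 0 ≤ t) :
    BddBelow (actionSet M L w x₀ y t) := by
  obtain ⟨C, hC0, hC⟩ := hL.exists_neg_le
  obtain ⟨B, hB0, hB⟩ := hw.exists_abs_le hL t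
  refine ⟨-gronwallBound 0 lam (C + lam * B) t, ?_⟩
  rintro _ ⟨γ, hγ, rfl⟩
  exact neg_gronwallBound_le_integral_runningCost hC0 hB0 hC ht hγ (hw.intervalIntegrable hL hγ ht)
    fun r hr => hB (hγ.restrict hr.2.le) (Ioo_subset_Ioc_self hr)

lemma le_add_integral (hL : TameLagrangian M L lam) (hw : IsValueFunction M L x₀ u₀ w)
    (hγ : ConnectingCurve M x₀ y t γ) (ht : 0 < t) :
    w y t ≤ u₀ + ∫ τ in (0 : ℝ)..t, runningCost L w γ τ :=
  hw.le_add_integral_of_bddBelow hγ ht (hw.bddBelow hL ht.le)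

lemma sub_le_integral (hL : TameLagrangian M L lam) (hw : IsValueFunction M L x₀ u₀ w)
    (hγ : ConnectingCurve M x₀ y t γ) (hr : 0 < r) (hrt : r ≤ t) :
    w y t - w (γ r) r ≤ ∫ τ in r..t, runningCost L w γ τ := by
  have hγr := hγ.restrict hrt
  have ht : 0 < t := hr.trans_le hrt
  have hsInf : sInf (actionSet M L w x₀ y t) - (∫ τ in r..t, runningCost L w γ τ) ≤
      sInf (actionSet M L w x₀ (γ r) r) := by
    refine le_csInf ⟨_, γ, hγr, rfl⟩ ?_
    rintro _ ⟨ζ, hζ, rfl⟩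
    rw [sub_le_iff_le_add]
    exact csInf_le (hw.bddBelow hL ht.le) (hL.add_integral_mem_actionSet hζ hγ hw.continuousOn hr
      hrt (hw.intervalIntegrable hL hζ hr.le))
  rw [hw.eq_add_sInf y (hγ.target_mem ht.le) t ht,
    hw.eq_add_sInf (γ r) (hγr.target_mem hr.le) r hr]
  linarith

lemma exists_forall_abs_sub_le (hL : TameLagrangian M L lam) (hw : IsValueFunction M L x₀ u₀ w)
    (hγ : ConnectingCurve M x₀ y t γ) (ht : 0 < t) {ε : ℝ} (hε : 0 < ε) :
    ∃ η, ConnectingCurve M x₀ y t η ∧ ∀ r ∈ Ioc 0 t,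
      |w (η r) r - (u₀ + ∫ τ in (0 : ℝ)..r, runningCost L w η τ)| ≤ ε := by
  obtain ⟨_, ⟨η, hη, rfl⟩, hlt⟩ := exists_lt_of_csInf_lt
    (s := actionSet M L w x₀ y t) ⟨_, γ, hγ, rfl⟩ (lt_add_of_pos_right _ hε)
  refine ⟨η, hη, fun r hr => ?_⟩
  have hηr := hη.restrict hr.2
  have heq := hw.eq_add_sInf y (hη.target_mem ht.le) t ht
  have hle := hw.le_add_integral hL hηr hr.1
  have hsub := hw.sub_le_integral hL hη hr.1 hr.2
  have hsplit := intervalIntegral.integral_add_adjacent_intervals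
    (hw.intervalIntegrable hL hηr hr.1.le)
    (hL.intervalIntegrable_of_pos hη hw.continuousOn hr.1 hr.2)
  exact abs_le.2 ⟨by linarith, by linarith⟩

end IsValueFunction

end ValueFunction

section ApproxTrajectory

variable {E : Type*} [NormedAddCommGroup E] [NormedSpace ℝ E] {M : Set E} {L : E → E → ℝ → ℝ}
  {lam : ℝ≥0} {x x₀ y : E} {u₀ a r s t δ ε : ℝ} {γ : ℝ → E} {e : ℝ → ℝ} {w w' : E → ℝ → ℝ}

/-- `e` solves the Carathéodory equation `e' = L(γ, γ', e)` along the curve `γ` on `[0, t]` up to a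
defect of at most `ε`. -/
def IsApproxTrajectory (L : E → E → ℝ → ℝ) (γ : ℝ → E) (t ε : ℝ) (e : ℝ → ℝ) : Prop :=
  ∃ F : ℝ → ℝ, IntervalIntegrable F volume 0 t ∧
    (∀ r ∈ Icc 0 t, e r = e 0 + ∫ τ in (0 : ℝ)..r, F τ) ∧
    ∀ r ∈ Ioo 0 t, |F r - L (γ r) (deriv γ r) (e r)| ≤ ε

namespace IsApproxTrajectory

lemma continuousOn (he : IsApproxTrajectory L γ t ε e) (ht : 0 ≤ t) : ContinuousOn e (Icc 0 t) := by
  obtain ⟨F, hF, heF, -⟩ := he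
  have hprim := intervalIntegral.continuousOn_primitive_interval' hF left_mem_uIcc
  rw [uIcc_of_le ht] at hprim
  exact (continuousOn_const.add hprim).congr heF

lemma reversed (he : IsApproxTrajectory L γ t ε e) :
    IsApproxTrajectory (reversedLagrangian L) (fun τ => γ (t - τ)) t ε fun τ => -e (t - τ) := by
  obtain ⟨F, hF, heF, hdefect⟩ := he
  refine ⟨fun τ => F (t - τ), ?_, fun r hr => ?_, fun r hr => ?_⟩
  · simpa only [sub_zero, sub_self] using (hF.comp_sub_left t).symm
  · have hr' : t - r ∈ Icc 0 t := ⟨sub_nonneg.2 hr.2, sub_le_self t hr.1⟩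
    have ht : 0 ≤ t := hr.1.trans hr.2
    have hadd := intervalIntegral.integral_add_adjacent_intervals
      (intervalIntegrable_of_subinterval hF le_rfl hr'.1 hr'.2)
      (intervalIntegrable_of_subinterval hF hr'.1 hr'.2 le_rfl)
    rw [intervalIntegral.integral_comp_sub_left F, sub_zero]
    simp only [sub_zero]
    linarith [heF (t - r) hr', heF t (right_mem_Icc.2 ht)]
  · simp only [reversedLagrangian, deriv_comp_const_sub, neg_neg]
    exact hdefect (t - r) ⟨sub_pos.2 hr.2, sub_lt_self t hr.1⟩

end IsApproxTrajectory

namespace IsValueFunction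

lemma continuousOn_sub (hw : IsValueFunction M L x₀ u₀ w) (hγ : ConnectingCurve M x₀ y t γ)
    (he : IsApproxTrajectory L γ t ε e) (ha : a ∈ Ioc 0 t) :
    ContinuousOn (fun τ => w (γ τ) τ - e τ) (Icc a t) :=
  ((hγ.continuousOn_uncurry_comp hw.continuousOn).mono (Icc_subset_Ioc ha.1 le_rfl)).sub
    ((he.continuousOn (ha.1.le.trans ha.2)).mono (Icc_subset_Icc_left ha.1.le))

variable [MeasurableSpace E] [BorelSpace E] [CompleteSpace E]

lemma sub_sub_le_integral (hL : TameLagrangian M L lam) (hw : IsValueFunction M L x₀ u₀ w)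
    (hγ : ConnectingCurve M x₀ y t γ) (he : IsApproxTrajectory L γ t ε e) (hr : 0 < r)
    (hrs : r ≤ s) (hst : s ≤ t) :
    w (γ s) s - e s - (w (γ r) r - e r) ≤ ∫ τ in r..s, (ε + lam * |w (γ τ) τ - e τ|) := by
  have hcont := (hw.continuousOn_sub hγ he ⟨hr, hrs.trans hst⟩).mono (Icc_subset_Icc_right hst)
  obtain ⟨F, hF, heF, hdefect⟩ := he
  have hFrs := intervalIntegrable_of_subinterval hF hr.le hrs hst
  have hcost := hL.intervalIntegrable_of_pos (hγ.restrict hst) hw.continuousOn hr hrs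
  have hadd := intervalIntegral.integral_add_adjacent_intervals
    (intervalIntegrable_of_subinterval hF le_rfl hr.le (hrs.trans hst)) hFrs
  calc w (γ s) s - e s - (w (γ r) r - e r)
      = w (γ s) s - w (γ r) r - ∫ τ in r..s, F τ := by
        rw [heF s ⟨hr.le.trans hrs, hst⟩, heF r ⟨hr.le, hrs.trans hst⟩, ← hadd]; ring
    _ ≤ (∫ τ in r..s, runningCost L w γ τ) - ∫ τ in r..s, F τ :=
        sub_le_sub_right (hw.sub_le_integral hL (hγ.restrict hst) hr hrs) _
    _ = ∫ τ in r..s, (runningCost L w γ τ - F τ) :=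
        (intervalIntegral.integral_sub hcost hFrs).symm
    _ ≤ ∫ τ in r..s, (ε + lam * |w (γ τ) τ - e τ|) := by
        refine intervalIntegral.integral_mono_on_of_le_Ioo hrs (hcost.sub hFrs)
          (ContinuousOn.intervalIntegrable_of_Icc hrs (by fun_prop)) fun τ hτ => ?_
        have hτt : τ ∈ Ioo 0 t := ⟨hr.trans hτ.1, hτ.2.trans_le hst⟩
        have hlip := le_of_abs_le
          (hL.abs_sub_le (hγ.mapsTo (Ioo_subset_Icc_self hτt)) (deriv γ τ) (w (γ τ) τ) (e τ))
        rw [runningCost]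
        linarith [neg_le_of_abs_le (hdefect τ hτt)]

/- The value function need not be continuous at time `0`, so `u₀ - e 0` cannot be fed directly to
Grönwall's inequality. -/
lemma exists_sub_lt (hL : TameLagrangian M L lam) (hw : IsValueFunction M L x₀ u₀ w)
    (hγ : ConnectingCurve M x₀ y t γ) (he : IsApproxTrajectory L γ t ε e) (ht : 0 < t)
    (h0 : u₀ - e 0 < δ) : ∃ a ∈ Ioc 0 t, w (γ a) a - e a < δ := by
  have hecont := he.continuousOn ht.le
  have hprim := intervalIntegral.continuousOn_primitive_interval'
    (hw.intervalIntegrable hL hγ ht.le) left_mem_uIcc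
  rw [uIcc_of_le ht.le] at hprim
  have hbound : ContinuousWithinAt
      (fun r => u₀ + (∫ τ in (0 : ℝ)..r, runningCost L w γ τ) - e r) (Ioc 0 t) 0 :=
    (((continuousOn_const.add hprim).sub hecont) 0 (left_mem_Icc.2 ht.le)).mono Ioc_subset_Icc_self
  have hev := hbound.eventually_lt_const (u := δ) (by simpa using h0)
  rw [nhdsWithin_Ioc_eq_nhdsGT ht] at hev
  obtain ⟨a, ha, hat⟩ := (hev.and (Ioc_mem_nhdsGT ht)).exists
  exact ⟨a, hat, by linarith [hw.le_add_integral hL (hγ.restrict hat.2) hat.1]⟩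

lemma sub_le_gronwallBound (hL : TameLagrangian M L lam) (hw : IsValueFunction M L x₀ u₀ w)
    (hγ : ConnectingCurve M x₀ y t γ) (he : IsApproxTrajectory L γ t ε e) (ht : 0 < t)
    (hδ : 0 ≤ δ) (hε : 0 ≤ ε) (h0 : u₀ - e 0 < δ) : w y t - e t ≤ gronwallBound δ lam ε t := by
  obtain ⟨a, ha, haδ⟩ := hw.exists_sub_lt hL hγ he ht h0
  calc w y t - e t = w (γ t) t - e t := by rw [hγ.target]
    _ ≤ gronwallBound δ lam ε (t - a) :=
        le_gronwallBound_of_sub_le_integral ha.2 hδ hε lam.coe_nonneg (hw.continuousOn_sub hγ he ha)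
          (fun r hr s hs => hw.sub_sub_le_integral hL hγ he (ha.1.trans_le hr.1) hs.1 hs.2) haδ.le
    _ ≤ gronwallBound δ lam ε t := gronwallBound_mono hδ hε lam.coe_nonneg (by linarith [ha.1])

lemma neg_gronwallBound_le_sub (hL : TameLagrangian M L lam) (hw : IsValueFunction M L x₀ u₀ w)
    (hγ : ConnectingCurve M x₀ y t γ) (he : IsApproxTrajectory L γ t ε e) (ht : 0 < t)
    (hδ : 0 ≤ δ) (hε : 0 ≤ ε) (hδt : -δ ≤ w y t - e t) :
    -gronwallBound δ lam ε t ≤ u₀ - e 0 := by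
  by_contra! h0
  obtain ⟨a, ha, haδ⟩ := hw.exists_sub_lt hL hγ he ht h0
  have hback := neg_gronwallBound_le_of_sub_le_integral ha.2 hδ hε lam.coe_nonneg
    (hw.continuousOn_sub hγ he ha)
    (fun r hr s hs => hw.sub_sub_le_integral hL hγ he (ha.1.trans_le hr.1) hs.1 hs.2)
    (by rwa [hγ.target])
  have hmono : gronwallBound δ lam ε (t - a) ≤ gronwallBound δ lam ε t :=
    gronwallBound_mono hδ hε lam.coe_nonneg (by linarith [ha.1])
  linarith

lemma exists_isApproxTrajectory (hL : TameLagrangian M L lam) (hw : IsValueFunction M L x₀ u₀ w)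
    (hγ : ConnectingCurve M x₀ y t γ) (ht : 0 < t) (hε : 0 < ε) :
    ∃ η e, ConnectingCurve M x₀ y t η ∧ IsApproxTrajectory L η t (ε * lam) e ∧ e 0 = u₀ ∧
      |w y t - e t| ≤ ε := by
  obtain ⟨η, hη, hηε⟩ := hw.exists_forall_abs_sub_le hL hγ ht hε
  refine ⟨η, fun r => u₀ + ∫ τ in (0 : ℝ)..r, runningCost L w η τ, hη,
    ⟨runningCost L w η, hw.intervalIntegrable hL hη ht.le, by simp, fun r hr => ?_⟩, by simp, ?_⟩
  · refine (hL.abs_sub_le (hη.mapsTo (Ioo_subset_Icc_self hr)) _ _ _).trans ?_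
    rw [mul_comm]
    exact mul_le_mul_of_nonneg_right (hηε r (Ioo_subset_Ioc_self hr)) lam.coe_nonneg
  · simpa only [hη.target] using hηε t (right_mem_Ioc.2 ht)

lemma reversed_le_neg (hL : TameLagrangian M L lam) (hw : IsValueFunction M L x₀ u₀ w)
    (hw' : IsValueFunction M (reversedLagrangian L) x (-w x t) w')
    (hγ : ConnectingCurve M x₀ x t γ) (ht : 0 < t) : w' x₀ t ≤ -u₀ := by
  suffices h : w' x₀ t + u₀ ≤ 0 by linarith
  refine nonpos_of_forall_pos_le_mul (c := gronwallBound 2 lam lam t) fun ε hε => ?_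
  obtain ⟨η, e, hη, he, he0, het⟩ := hw.exists_isApproxTrajectory hL hγ ht hε
  have hcomp := hw'.sub_le_gronwallBound hL.reversed hη.reverse he.reversed ht (δ := ε * 2)
    (by positivity) (by positivity) (by rw [sub_zero]; linarith [neg_le_of_abs_le het])
  rw [gronwallBound_mul_mul] at hcomp
  simpa only [sub_self, he0, sub_neg_eq_add] using hcomp

lemma neg_le_reversed (hL : TameLagrangian M L lam) (hw : IsValueFunction M L x₀ u₀ w)
    (hw' : IsValueFunction M (reversedLagrangian L) x (-w x t) w')
    (hγ : ConnectingCurve M x₀ x t γ) (ht : 0 < t) : -u₀ ≤ w' x₀ t := by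
  suffices h : -u₀ - w' x₀ t ≤ 0 by linarith
  refine nonpos_of_forall_pos_le_mul (c := 1 + gronwallBound 0 lam lam t) fun ε hε => ?_
  obtain ⟨η, e, hη, he, he0, het⟩ := hw'.exists_isApproxTrajectory hL.reversed hγ.reverse ht hε
  have he' := he.reversed
  rw [reversedLagrangian_reversedLagrangian] at he'
  have hcomp := hw.neg_gronwallBound_le_sub hL hη.reverse he' ht le_rfl (by positivity)
    (by simp only [sub_self, he0, neg_neg, neg_zero, le_refl])
  have hscale := gronwallBound_mul_mul ε 0 lam lam t
  rw [mul_zero] at hscale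
  rw [hscale, sub_zero] at hcomp
  linarith [neg_le_of_abs_le het]

theorem reversed_eq_neg (hL : TameLagrangian M L lam) (hw : IsValueFunction M L x₀ u₀ w)
    (hw' : IsValueFunction M (reversedLagrangian L) x (-w x t) w') (hx₀ : x₀ ∈ M) (hx : x ∈ M)
    (ht : 0 < t) : w' x₀ t = -u₀ := by
  by_cases h : ∃ γ, ConnectingCurve M x₀ x t γ
  · obtain ⟨γ, hγ⟩ := h
    exact (hw.reversed_le_neg hL hw' hγ ht).antisymm (hw.neg_le_reversed hL hw' hγ ht)
  · push Not at h
    rw [hw'.eq_of_forall_not_connectingCurve hx₀ ht fun γ hγ => h _ hγ.reverse,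
      hw.eq_of_forall_not_connectingCurve hx ht h]

end IsValueFunction

end ApproxTrajectory

section Convexity

lemma convexOn_univ_of_forall_line {E : Type*} [AddCommGroup E] [Module ℝ E] {f : E → ℝ}
    (hf : ∀ p v, ConvexOn ℝ univ fun s : ℝ => f (p + s • v)) : ConvexOn ℝ univ f := by
  refine ⟨convex_univ, fun p _ q _ a b ha hb hab => ?_⟩
  have hline := (hf p (q - p)).2 (mem_univ 0) (mem_univ 1) ha hb hab
  simp only [smul_eq_mul, mul_zero, mul_one, zero_add, zero_smul, add_zero, one_smul,
    add_sub_cancel] at hline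
  have hpq : a • p + b • q = p + b • (q - p) := by
    rw [eq_sub_of_add_eq hab]
    module
  rwa [hpq]

lemma convexOn_univ_of_inner_fderiv_gradient_nonneg {E : Type*} [NormedAddCommGroup E]
    [InnerProductSpace ℝ E] [CompleteSpace E] {f : E → ℝ} (hf : ContDiff ℝ 2 f)
    (hpos : ∀ p v, 0 ≤ ⟪fderiv ℝ (gradient f) p v, v⟫) : ConvexOn ℝ univ f := by
  refine convexOn_univ_of_forall_line fun p v => ?_
  have hgrad : ContDiff ℝ 1 (gradient f) :=
    (InnerProductSpace.toDual ℝ E).symm.contDiff.comp (hf.fderiv_right (by norm_num))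
  have hline (s : ℝ) : HasDerivAt (fun s : ℝ => p + s • v) v s := by
    simpa only [one_smul] using ((hasDerivAt_id' s).smul_const v).const_add p
  have hderiv (s : ℝ) :
      HasDerivAt (fun s : ℝ => f (p + s • v)) ⟪gradient f (p + s • v), v⟫ s := by
    simpa using! ((hf.differentiable (by norm_num)) (p + s • v)).hasGradientAt.hasFDerivAt
      |>.comp_hasDerivAt s (hline s)
  have hderiv₂ (s : ℝ) : HasDerivAt (fun s : ℝ => ⟪gradient f (p + s • v), v⟫)
      ⟪fderiv ℝ (gradient f) (p + s • v) v, v⟫ s := by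
    simpa using (((hgrad.differentiable (by norm_num)) (p + s • v)).hasFDerivAt.comp_hasDerivAt s
      (hline s)).inner ℝ (hasDerivAt_const s v)
  refine Monotone.convexOn_univ_of_deriv (fun s => (hderiv s).differentiableAt) ?_
  rw [funext fun s => (hderiv s).deriv]
  refine monotone_of_deriv_nonneg (fun s => (hderiv₂ s).differentiableAt) fun s => ?_
  rw [(hderiv₂ s).deriv]
  exact hpos _ v

lemma mul_norm_le_sub_of_convexOn {E : Type*} [NormedAddCommGroup E] [NormedSpace ℝ E]
    {f : E → ℝ} {K R : ℝ} (hf : ConvexOn ℝ univ f) (hR : 0 < R)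
    (hsphere : ∀ q ∈ Metric.sphere (0 : E) R, K * R ≤ f q - f 0) {p : E} (hp : R ≤ ‖p‖) :
    K * ‖p‖ ≤ f p - f 0 := by
  have hp0 : 0 < ‖p‖ := hR.trans_le hp
  have hs : 0 < R / ‖p‖ := div_pos hR hp0
  have hconv := hf.2 (mem_univ 0) (mem_univ p) (sub_nonneg.2 ((div_le_one hp0).2 hp)) hs.le
    (sub_add_cancel _ _)
  simp only [smul_eq_mul, smul_zero, zero_add] at hconv
  have hmem : (R / ‖p‖) • p ∈ Metric.sphere (0 : E) R := by
    rw [mem_sphere_zero_iff_norm, norm_smul, Real.norm_of_nonneg hs.le, div_mul_cancel₀ _ hp0.ne']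
  refine le_of_mul_le_mul_left ?_ hs
  calc R / ‖p‖ * (K * ‖p‖) = K * R := by field_simp
    _ ≤ f ((R / ‖p‖) • p) - f 0 := hsphere _ hmem
    _ ≤ R / ‖p‖ * (f p - f 0) := by linarith

end Convexity

section Legendre

section Family

variable {X E : Type*} [TopologicalSpace X] [NormedAddCommGroup E] [ProperSpace E]
  {F : X → E → ℝ} {x₀ : X}

lemma exists_eventually_forall_sphere_lt (hF : Continuous fun z : X × E => F z.1 z.2)
    (hsup : Tendsto (fun p => F x₀ p / ‖p‖) (cocompact E) atTop) (K : ℝ) :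
    ∃ R > 0, ∀ᶠ x in 𝓝 x₀, ∀ p ∈ Metric.sphere (0 : E) R, K * R < F x p - F x 0 := by
  have hev := hsup.eventually_ge_atTop (K + 1 + |F x₀ 0|)
  rw [← Metric.cobounded_eq_cocompact, hasBasis_cobounded_norm.eventually_iff] at hev
  obtain ⟨R₀, -, hR₀⟩ := hev
  have hR1 : 1 ≤ max R₀ 1 := le_max_right _ _
  refine ⟨max R₀ 1, zero_lt_one.trans_le hR1, ?_⟩
  refine (isCompact_sphere _ _).eventually_forall_of_forall_eventually fun p hp => ?_
  have hF₀ : Continuous fun z : X × E => F z.1 0 :=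
    hF.comp (f := fun z : X × E => (z.1, (0 : E))) (by fun_prop)
  refine (hF.sub hF₀).continuousAt.eventually_const_lt ?_
  rw [mem_sphere_zero_iff_norm] at hp
  have hlarge := hR₀ (show R₀ ≤ ‖p‖ from hp ▸ le_max_left R₀ 1)
  rw [le_div_iff₀ (by linarith), hp] at hlarge
  calc K * max R₀ 1 < (K + 1) * max R₀ 1 + (|F x₀ 0| * max R₀ 1 - |F x₀ 0|) := by
        nlinarith [abs_nonneg (F x₀ 0)]
    _ ≤ F x₀ p - F x₀ 0 := by linarith [le_abs_self (F x₀ 0)]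

lemma exists_eventually_mul_norm_le_sub [NormedSpace ℝ E]
    (hF : Continuous fun z : X × E => F z.1 z.2) (hconv : ∀ x, ConvexOn ℝ univ (F x))
    (hsup : Tendsto (fun p => F x₀ p / ‖p‖) (cocompact E) atTop) (K : ℝ) :
    ∃ R > 0, ∀ᶠ x in 𝓝 x₀, ∀ p, R ≤ ‖p‖ → K * ‖p‖ ≤ F x p - F x 0 := by
  obtain ⟨R, hR, hev⟩ := exists_eventually_forall_sphere_lt hF hsup K
  refine ⟨R, hR, hev.mono fun x hx p hp => ?_⟩
  exact mul_norm_le_sub_of_convexOn (hconv x) hR (fun q hq => (hx q hq).le) hp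

lemma exists_eventually_forall_closedBall_lt (hF : Continuous fun z : X × E => F z.1 z.2)
    (x₀ : X) (R : ℝ) :
    ∃ m, ∀ᶠ x in 𝓝 x₀, ∀ p ∈ Metric.closedBall (0 : E) R, m < F x p := by
  obtain ⟨m, hm⟩ := ((isCompact_closedBall (0 : E) R).image
    (hF.comp (Continuous.prodMk_right x₀))).bddBelow
  refine ⟨m - 1, (isCompact_closedBall _ _).eventually_forall_of_forall_eventually fun p hp => ?_⟩
  exact hF.continuousAt.eventually_const_lt ((sub_one_lt m).trans_le (hm ⟨p, hp, rfl⟩))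

end Family

lemma exists_eventually_inner_sub_le {X E : Type*} [TopologicalSpace X] [NormedAddCommGroup E]
    [InnerProductSpace ℝ E] [ProperSpace E] {F : X → E → ℝ} {x₀ : X}
    (hF : Continuous fun z : X × E => F z.1 z.2) (hconv : ∀ x, ConvexOn ℝ univ (F x))
    (hsup : Tendsto (fun p => F x₀ p / ‖p‖) (cocompact E) atTop) (K : ℝ) :
    ∃ C, ∀ᶠ x in 𝓝 x₀, ∀ p v, ‖v‖ ≤ K → ⟪p, v⟫ - F x p ≤ C := by
  obtain ⟨R, hR, hcoercive⟩ := exists_eventually_mul_norm_le_sub hF hconv hsup |K|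
  obtain ⟨m, hball⟩ := exists_eventually_forall_closedBall_lt hF x₀ R
  refine ⟨|K| * R - m, ?_⟩
  filter_upwards [hcoercive, hball] with x hfar hnear p v hv
  have hpv : ⟪p, v⟫ ≤ |K| * ‖p‖ :=
    calc ⟪p, v⟫ ≤ ‖p‖ * ‖v‖ := real_inner_le_norm p v
      _ ≤ ‖p‖ * |K| := by gcongr; exact hv.trans (le_abs_self K)
      _ = |K| * ‖p‖ := mul_comm _ _
  rcases le_total R ‖p‖ with hp | hp
  · have hKR : 0 ≤ |K| * R := by positivity
    linarith [hnear 0 (Metric.mem_closedBall_self hR.le), hfar p hp]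
  · have hpR : |K| * ‖p‖ ≤ |K| * R := by gcongr
    linarith [hnear p (mem_closedBall_zero_iff.2 hp)]

variable {H L : Euc n → Euc n → ℝ → ℝ} {lam : ℝ≥0} {M : Set (Euc n)} {x v : Euc n} {u : ℝ}

namespace IsLegendre

lemma eq_ciSup (hLeg : IsLegendre H L) (x v : Euc n) (u : ℝ) :
    L x v u = ⨆ p, (⟪p, v⟫ - H x p u) := by
  rw [hLeg, iSup]
  congr 1
  ext r
  simp only [mem_ofPred_eq, mem_range, eq_comm]

lemma inner_sub_le (hLeg : IsLegendre H L) (hbdd : BddAbove (range fun p => ⟪p, v⟫ - H x p u))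
    (p : Euc n) : ⟪p, v⟫ - H x p u ≤ L x v u := by
  rw [hLeg.eq_ciSup]
  exact le_ciSup hbdd p

lemma measurable (hLeg : IsLegendre H L)
    (hH : Continuous fun z : Euc n × Euc n × ℝ => H z.1 z.2.1 z.2.2)
    (hbdd : ∀ x v u, BddAbove (range fun p => ⟪p, v⟫ - H x p u)) :
    Measurable fun z : Euc n × Euc n × ℝ => L z.1 z.2.1 z.2.2 := by
  simp_rw [hLeg.eq_ciSup]
  refine LowerSemicontinuous.measurable
    (lowerSemicontinuous_ciSup (fun z => hbdd z.1 z.2.1 z.2.2) fun p => ?_)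
  have hHp : Continuous fun z : Euc n × Euc n × ℝ => H z.1 p z.2.2 :=
    hH.comp (f := fun z : Euc n × Euc n × ℝ => (z.1, p, z.2.2)) (by fun_prop)
  exact (Continuous.sub (by fun_prop) hHp).lowerSemicontinuous

lemma lipschitzWith (hLeg : IsLegendre H L) (hlip : ∀ p, LipschitzWith lam (H x p))
    (hbdd : ∀ u, BddAbove (range fun p => ⟪p, v⟫ - H x p u)) : LipschitzWith lam (L x v) := by
  refine LipschitzWith.of_le_add_mul lam fun u u' => ?_
  rw [hLeg.eq_ciSup x v u]
  refine ciSup_le fun p => ?_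
  have hHp := (hlip p).le_add_mul u' u
  rw [dist_comm] at hHp
  linarith [hLeg.inner_sub_le (hbdd u') p]

lemma exists_forall_ge (hLeg : IsLegendre H L) (hM : IsCompact M)
    (hH : Continuous fun x => H x 0 u)
    (hbdd : ∀ x v, BddAbove (range fun p => ⟪p, v⟫ - H x p u)) :
    ∃ C, ∀ x ∈ M, ∀ v, C ≤ L x v u := by
  obtain ⟨C, hC⟩ := (hM.image hH).bddAbove
  refine ⟨-C, fun x hx v => ?_⟩
  calc -C ≤ -H x 0 u := neg_le_neg (hC ⟨x, hx, rfl⟩)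
    _ = ⟪0, v⟫ - H x 0 u := by rw [inner_zero_left, zero_sub]
    _ ≤ L x v u := hLeg.inner_sub_le (hbdd x v) 0

lemma exists_forall_le {K : ℝ} (hLeg : IsLegendre H L) (hM : IsCompact M)
    (hloc : ∀ x₀ ∈ M, ∃ C, ∀ᶠ x in 𝓝 x₀, ∀ p v, ‖v‖ ≤ K → ⟪p, v⟫ - H x p u ≤ C) :
    ∃ C, ∀ x ∈ M, ∀ v, ‖v‖ ≤ K → L x v u ≤ C := by
  refine hM.induction_on (p := fun S => ∃ C, ∀ x ∈ S, ∀ v, ‖v‖ ≤ K → L x v u ≤ C)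
    ⟨0, fun _ h => h.elim⟩ (fun S T hST ⟨C, hC⟩ => ⟨C, fun x hx => hC x (hST hx)⟩) ?_ ?_
  · rintro S T ⟨C, hC⟩ ⟨D, hD⟩
    refine ⟨max C D, fun x hx v hv => ?_⟩
    rcases hx with hx | hx
    · exact (hC x hx v hv).trans (le_max_left _ _)
    · exact (hD x hx v hv).trans (le_max_right _ _)
  · intro x₀ hx₀
    obtain ⟨C, hC⟩ := hloc x₀ hx₀
    refine ⟨_, mem_nhdsWithin_of_mem_nhds hC, C, fun x hx v hv => ?_⟩
    rw [hLeg.eq_ciSup]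
    exact ciSup_le fun p => hx p v hv

lemma tameLagrangian (hLeg : IsLegendre H L)
    (hH : Continuous fun z : Euc n × Euc n × ℝ => H z.1 z.2.1 z.2.2)
    (hconv : ∀ x u, ConvexOn ℝ univ fun p => H x p u) (hsup : Superlinear H)
    (hlip : ∀ x p, LipschitzWith lam (H x p)) (hM : IsCompact M) : TameLagrangian M L lam := by
  have hHu (u : ℝ) : Continuous fun z : Euc n × Euc n => H z.1 z.2 u :=
    hH.comp (f := fun z : Euc n × Euc n => (z.1, z.2, u)) (by fun_prop)
  have hloc (x₀ : Euc n) (u K : ℝ) :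
      ∃ C, ∀ᶠ x in 𝓝 x₀, ∀ p v, ‖v‖ ≤ K → ⟪p, v⟫ - H x p u ≤ C :=
    exists_eventually_inner_sub_le (hHu u) (fun x => hconv x u) (hsup x₀ u) K
  have hbdd (x v : Euc n) (u : ℝ) : BddAbove (range fun p => ⟪p, v⟫ - H x p u) := by
    obtain ⟨C, hC⟩ := hloc x u ‖v‖
    exact ⟨C, forall_mem_range.2 fun p => hC.self_of_nhds p v le_rfl⟩
  exact
    { measurable := hLeg.measurable hH hbdd
      lipschitzWith := fun x _ v => hLeg.lipschitzWith (hlip x) (hbdd x v)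
      exists_forall_ge := hLeg.exists_forall_ge hM
        ((hHu 0).comp (Continuous.prodMk_left 0)) fun x v => hbdd x v 0
      exists_forall_le := fun K => hLeg.exists_forall_le hM fun x₀ _ => hloc x₀ 0 K }

end IsLegendre

lemma C3.contDiff_momentum (hC3 : C3 H) (x : Euc n) (u : ℝ) : ContDiff ℝ 3 fun p => H x p u :=
  ContDiff.comp (g := fun z : Euc n × Euc n × ℝ => H z.1 z.2.1 z.2.2)
    (f := fun p : Euc n => (x, p, u)) hC3 (by fun_prop)

lemma C3.contDiff_value (hC3 : C3 H) (x p : Euc n) : ContDiff ℝ 3 (H x p) :=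
  ContDiff.comp (g := fun z : Euc n × Euc n × ℝ => H z.1 z.2.1 z.2.2)
    (f := fun u : ℝ => (x, p, u)) hC3 (by fun_prop)

lemma PosDefInP.convexOn (hpos : PosDefInP H) (hH : ContDiff ℝ 2 fun p => H x p u) :
    ConvexOn ℝ univ fun p => H x p u := by
  refine convexOn_univ_of_inner_fderiv_gradient_nonneg hH fun p v => ?_
  rcases eq_or_ne v 0 with rfl | hv
  · rw [inner_zero_right]
  · exact (hpos x u p v hv).le

lemma LipInU.lipschitzWith {p : Euc n} (hlip : LipInU H lam) (hH : Differentiable ℝ (H x p)) :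
    LipschitzWith lam (H x p) :=
  lipschitzWith_of_nnnorm_deriv_le hH fun u => NNReal.coe_le_coe.1 (hlip x p u)

end Legendre

section Actions

variable {M : Set (Euc n)} {L : Euc n → Euc n → ℝ → ℝ} {x₀ : Euc n}

lemma IsBackwardAction.isValueFunction {hb : Euc n → ℝ → Euc n → ℝ → ℝ}
    (hhb : IsBackwardAction M L hb) (hx₀ : x₀ ∈ M) (u₀ : ℝ) :
    IsValueFunction M L x₀ u₀ (hb x₀ u₀) where
  continuousOn := hhb.1.comp (f := fun q : Euc n × ℝ => (x₀, u₀, q.1, q.2)) (by fun_prop)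
    fun _ hq => ⟨hx₀, mem_univ _, hq.1, hq.2⟩
  eq_add_sInf y hy t ht := by
    rw [hhb.2 x₀ hx₀ u₀ y hy t ht]
    congr 2
    ext a
    exact ⟨fun ⟨γ, hK, hM, h₀, h₁, ha⟩ => ⟨γ, ⟨hK, hM, h₀, h₁⟩, ha⟩,
      fun ⟨γ, ⟨hK, hM, h₀, h₁⟩, ha⟩ => ⟨γ, hK, hM, h₀, h₁, ha⟩⟩

lemma integral_runningCost_reversedLagrangian {E : Type*} [NormedAddCommGroup E] [NormedSpace ℝ E]
    (L : E → E → ℝ → ℝ) (w : E → ℝ → ℝ) (γ : ℝ → E) (t : ℝ) :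
    ∫ τ in (0 : ℝ)..t, runningCost (reversedLagrangian L) (fun y t => -w y t)
        (fun τ => γ (t - τ)) τ =
      ∫ τ in (0 : ℝ)..t, L (γ τ) (deriv γ τ) (w (γ τ) (t - τ)) := by
  have hflip := intervalIntegral.integral_comp_sub_left (a := 0) (b := t)
    (fun τ => L (γ τ) (deriv γ τ) (w (γ τ) (t - τ))) t
  rw [sub_self, sub_zero] at hflip
  rw [← hflip]
  refine intervalIntegral.integral_congr fun τ _ => ?_
  simp only [runningCost, reversedLagrangian]
  rw [deriv_comp_const_sub, neg_neg, neg_neg, sub_sub_cancel]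

lemma IsForwardAction.isValueFunction {hf : Euc n → ℝ → Euc n → ℝ → ℝ}
    (hhf : IsForwardAction M L hf) (hx₀ : x₀ ∈ M) (u₀ : ℝ) :
    IsValueFunction M (reversedLagrangian L) x₀ (-u₀) (fun y t => -hf x₀ u₀ y t) where
  continuousOn := (hhf.1.comp (f := fun q : Euc n × ℝ => (x₀, u₀, q.1, q.2)) (by fun_prop)
    fun _ hq => ⟨hx₀, mem_univ _, hq.1, hq.2⟩).neg
  eq_add_sInf y hy t ht := by
    rw [hhf.2 x₀ hx₀ u₀ y hy t ht, neg_sub, sub_eq_neg_add]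
    congr 2
    ext a
    constructor
    · rintro ⟨γ, hK, hM, h₀, h₁, rfl⟩
      exact ⟨_, ConnectingCurve.reverse ⟨hK, hM, h₀, h₁⟩,
        (integral_runningCost_reversedLagrangian L _ γ t).symm⟩
    · rintro ⟨γ, hγ, rfl⟩
      obtain ⟨hK, hM, h₀, h₁⟩ := hγ.reverse
      refine ⟨_, hK, hM, h₀, h₁, ?_⟩
      rw [← integral_runningCost_reversedLagrangian]
      simp only [sub_sub_cancel]

end Actions

theorem backward_forward_action_equivalence_general {M : Set (Euc n)} {L : Euc n → Euc n → ℝ → ℝ}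
    {lam : ℝ≥0} (hL : TameLagrangian M L lam) {hb hf : Euc n → ℝ → Euc n → ℝ → ℝ}
    (hhb : IsBackwardAction M L hb) (hhf : IsForwardAction M L hf) :
    ∀ x₀ ∈ M, ∀ x ∈ M, ∀ u₀ u : ℝ, ∀ t > (0 : ℝ), (hb x₀ u₀ x t = u ↔ hf x u x₀ t = u₀) := by
  intro x₀ hx₀ x hx u₀ u t ht
  constructor
  · rintro rfl
    have hreversed := (hhb.isValueFunction hx₀ u₀).reversed_eq_neg hL
      (hhf.isValueFunction hx (hb x₀ u₀ x t)) hx₀ hx ht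
    exact neg_inj.1 hreversed
  · rintro rfl
    have hb_value := hhb.isValueFunction hx₀ (hf x u x₀ t)
    rw [← reversedLagrangian_reversedLagrangian L, ← neg_neg (hf x u x₀ t)] at hb_value
    simpa only [neg_neg] using
      (hhf.isValueFunction hx u).reversed_eq_neg hL.reversed hb_value hx hx₀ ht

/-- **Proposition 2.4 (Equivalence)**: `h_{x₀,u₀}(x,t) = u ⟺ h^{x,u}(x₀,t) = u₀`. -/
theorem backward_forward_action_equivalence {n : ℕ}
    (H L : Euc n → Euc n → ℝ → ℝ) (lam : ℝ) (hlam : 0 < lam)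
    (hC3 : C3 H) (hH1 : PosDefInP H) (hH2 : Superlinear H) (hH3 : LipInU H lam)
    (M : Set (Euc n)) (hM : IsCompact M) (hMconn : IsConnected M)
    (Φ : ℝ → Euc n × Euc n × ℝ → Euc n × Euc n × ℝ) (hΦ : IsContactFlow H Φ)
    (hLeg : IsLegendre H L)
    (hb : Euc n → ℝ → Euc n → ℝ → ℝ) (hhb : IsBackwardAction M L hb)
    (hf : Euc n → ℝ → Euc n → ℝ → ℝ) (hhf : IsForwardAction M L hf) :
    ∀ x₀ ∈ M, ∀ x ∈ M, ∀ u₀ u : ℝ, ∀ t > (0:ℝ),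
      (hb x₀ u₀ x t = u ↔ hf x u x₀ t = u₀) := by
  lift lam to ℝ≥0 using hlam.le
  have hL : TameLagrangian M L lam :=
    hLeg.tameLagrangian (ContDiff.continuous hC3)
      (fun x u => hH1.convexOn ((hC3.contDiff_momentum x u).of_le (by norm_num))) hH2
      (fun x p => hH3.lipschitzWith ((hC3.contDiff_value x p).differentiable (by norm_num))) hM
  exact backward_forward_action_equivalence_general hL hhb hhf

end
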